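/- Let n ≥ 1, R > 0, and let B_R := {x ∈ ℝⁿ : |x| < R} with d(x) := R − |x|. Then for every s ≥ 2, every γ > 1, and every u ∈ C_c^∞(B_R), one has ∫_{B_R} |∇u| / d^{s−1} dx ≥ (s−1) · ∫_{B_R} |u| / d^s dx + Σ_{k=1}^{⌊s⌋−1} ((n−1)/R^k) · ∫_{B_R} |u| / d^{s−k} dx + ((γ−1)/R^{s−1}) · ∫_{B_R} (|u| / d) · X^γ(d/R) dx. -/

import Mathlib

open MeasureTheory Metric Set

/-! A radial vector field `φ(|x|) x/|x|` with `φ ≥ 0` calibrates the inequality: along every ray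
`r ↦ r ω` the fundamental theorem of calculus for `r ^ (n - 1) φ(r) ‖u(r ω)‖`, which vanishes near
`r = R`, gives `∫ φ ‖∇u‖ ≥ ∫ div(φ x/|x|) ‖u‖` after integration in polar coordinates. With
`d = R - r`, take `φ = d ^ (1 - s) - R ^ (1 - s) X ^ (γ - 1) (d/R) ≤ d ^ (1 - s)`. Its radial
derivative produces the leading and the logarithmic terms. In the remaining part `(n - 1) φ / r` of
the divergence, the series comes from the geometric sum
`r ∑_{k ≤ m} R ^ (-k) d ^ (k - s) = d ^ (1 - s) (1 - (d/R) ^ m)`, which is at most `φ` when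
`m ≤ s - 1`, because `X ≤ 1`. -/

open Module (finrank finrank_pos)

theorem exists_hasDerivWithinAt_norm_Ioi {F : Type*} [NormedAddCommGroup F] [NormedSpace ℝ F]
    {h : ℝ → F} {h' : F} {x : ℝ} (hh : HasDerivAt h h' x) :
    ∃ D, HasDerivWithinAt (fun y ↦ ‖h y‖) D (Ioi x) x ∧ |D| ≤ ‖h'‖ := by
  let tangent : ℝ →ᵃ[ℝ] F := AffineMap.lineMap (h x - x • h') (h x - x • h' + h')
  have tangent_apply (y : ℝ) : tangent y = h x + (y - x) • h' := by
    simp only [tangent, AffineMap.lineMap_apply_module']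
    module
  -- The norm of the tangent line is convex, hence has a right derivative, and it is within
  -- `o(y - x)` of `‖h y‖`.
  have hconv : ConvexOn ℝ univ fun y ↦ ‖tangent y‖ := convexOn_univ_norm.comp_affineMap tangent
  obtain ⟨D, hD⟩ : ∃ D, HasDerivWithinAt (fun y ↦ ‖tangent y‖) D (Ioi x) x :=
    ⟨_, hconv.hasDerivWithinAt_rightDeriv_of_mem_interior (by simp)⟩
  have hclose : HasDerivWithinAt (fun y ↦ ‖h y‖ - ‖tangent y‖) 0 (Ioi x) x := by
    refine hasDerivWithinAt_iff_isLittleO.2 <|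
      (Asymptotics.IsBigO.of_norm_le fun y ↦ ?_).trans_isLittleO
        (hasDerivWithinAt_iff_isLittleO.1 hh.hasDerivWithinAt).norm_left
    simpa [tangent_apply, sub_sub] using abs_norm_sub_norm_le (h y) (tangent y)
  have hnorm : HasDerivWithinAt (fun y ↦ ‖h y‖) D (Ioi x) x := by
    simpa using hclose.fun_add hD
  refine ⟨D, hnorm, ?_⟩
  rw [hasDerivWithinAt_iff_tendsto_slope' self_notMem_Ioi] at hnorm
  refine le_of_tendsto_of_tendsto' hnorm.abs
    ((hasDerivWithinAt_iff_tendsto_slope' self_notMem_Ioi).1 hh.hasDerivWithinAt).norm fun y ↦ ?_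
  rw [slope_def_field, slope_def_module, norm_smul, abs_div, norm_inv, div_eq_inv_mul]
  exact mul_le_mul_of_nonneg_left (abs_norm_sub_norm_le _ _) (by positivity)

theorem hasDerivAt_pow_of_ne_zero (k : ℕ) {r : ℝ} (hr : r ≠ 0) :
    HasDerivAt (fun r ↦ r ^ k) (r ^ k * (k / r)) r := by
  simpa [zpow_sub_one₀ hr, div_eq_mul_inv, mul_left_comm] using hasDerivAt_zpow k r (.inl hr)

theorem intervalIntegral_norm_mul_sub_nonneg {F : Type*} [NormedAddCommGroup F] [NormedSpace ℝ F]
    {a b : ℝ} (hab : a ≤ b) {h : ℝ → F} {N p q : ℝ → ℝ}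
    (hh : ContinuousOn h (Icc a b)) (hN : ContinuousOn N (Icc a b))
    (hp : ContinuousOn p (Icc a b)) (hq : ContinuousOn q (Icc a b))
    (hhN : ∀ r ∈ Ioo a b, ∃ h', HasDerivAt h h' r ∧ ‖h'‖ ≤ N r)
    (hpq : ∀ r ∈ Ioo a b, ∃ p', HasDerivAt p p' r ∧ q r ≤ p')
    (hp₀ : ∀ r ∈ Icc a b, 0 ≤ p r) (hb : h b = 0) :
    0 ≤ ∫ r in a..b, (N r * p r - ‖h r‖ * q r) := by
  have hderiv : ∀ r ∈ Ioo a b, ∃ D, HasDerivWithinAt (fun r ↦ -(‖h r‖ * p r)) D (Ioi r) r ∧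
      D ≤ N r * p r - ‖h r‖ * q r := by
    intro r hr
    obtain ⟨h', hh', hle⟩ := hhN r hr
    obtain ⟨p', hp', hqp⟩ := hpq r hr
    obtain ⟨D, hD, hDle⟩ := exists_hasDerivWithinAt_norm_Ioi hh'
    refine ⟨_, (hD.fun_mul hp'.hasDerivWithinAt).fun_neg, ?_⟩
    have hDN : -D ≤ N r := (neg_le_abs D).trans (hDle.trans hle)
    have h1 := mul_le_mul_of_nonneg_right hDN (hp₀ r (Ioo_subset_Icc_self hr))
    have h2 := mul_le_mul_of_nonneg_left hqp (norm_nonneg (h r))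
    linarith
  choose! D hD hDle using hderiv
  calc 0 ≤ ‖h a‖ * p a := mul_nonneg (norm_nonneg _) (hp₀ a (left_mem_Icc.2 hab))
    _ = -(‖h b‖ * p b) - -(‖h a‖ * p a) := by simp [hb]
    _ ≤ ∫ r in a..b, (N r * p r - ‖h r‖ * q r) :=
      intervalIntegral.sub_le_integral_of_hasDeriv_right_of_le hab (hh.norm.mul hp).fun_neg hD
        ((hN.mul hp).sub (hh.norm.mul hq)).integrableOn_Icc hDle

section Polar

variable {E F : Type*} [NormedAddCommGroup E] [NormedSpace ℝ E] [FiniteDimensional ℝ E]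
  [MeasurableSpace E] [BorelSpace E] [NormedAddCommGroup F] [NormedSpace ℝ F]
  (μ : Measure E) [μ.IsAddHaarMeasure]

theorem integral_volumeIoiPow (k : ℕ) (f : ℝ → F) :
    ∫ r : Ioi (0 : ℝ), f r ∂Measure.volumeIoiPow k = ∫ r in Ioi (0 : ℝ), r ^ k • f r := by
  rw [Measure.volumeIoiPow, integral_withDensity_eq_integral_toReal_smul (by fun_prop) (by simp),
    ← integral_subtype_comap measurableSet_Ioi fun r ↦ r ^ k • f r]
  exact integral_congr_ae <| .of_forall fun r ↦ by
    simp [ENNReal.toReal_ofReal (pow_nonneg r.2.out.le k)]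

theorem integral_eq_integral_toSphere_integral_Ioi [Nontrivial E] {f : E → F}
    (hf : Integrable f μ) :
    ∫ x, f x ∂μ = ∫ ω : sphere (0 : E) 1,
      (∫ r in Ioi (0 : ℝ), r ^ (finrank ℝ E - 1) • f (r • ω.1)) ∂μ.toSphere := by
  let polar := homeomorphUnitSphereProd E
  let g (p : sphere (0 : E) 1 × Ioi (0 : ℝ)) : F := f (p.2.1 • p.1.1)
  have hpolar := μ.measurePreserving_homeomorphUnitSphereProd
  have hcomp : g ∘ polar = f ∘ Subtype.val := by
    ext x
    simp [g, polar, smul_smul, norm_ne_zero_iff.2 x.2]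
  have hg : Integrable g (μ.toSphere.prod (.volumeIoiPow (finrank ℝ E - 1))) := by
    rw [← hpolar.integrable_comp_emb polar.measurableEmbedding, hcomp,
      ← integrableOn_iff_comap_subtypeVal (measurableSet_singleton _).compl]
    exact hf.integrableOn
  calc ∫ x, f x ∂μ = ∫ x : ({0}ᶜ : Set E), f x ∂μ.comap (↑) := by
        rw [integral_subtype_comap (measurableSet_singleton _).compl f, restrict_compl_singleton]
    _ = ∫ x, g (polar x) ∂μ.comap (↑) := integral_congr_ae (.of_forall (congrFun hcomp.symm))
    _ = ∫ p, g p ∂μ.toSphere.prod (.volumeIoiPow (finrank ℝ E - 1)) :=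
        hpolar.integral_comp polar.measurableEmbedding g
    _ = _ := by simp only [integral_prod _ hg, g, ← integral_volumeIoiPow]

end Polar

theorem integrable_norm_mul_comp_norm {E F : Type*} [NormedAddCommGroup E] [ProperSpace E]
    [MeasurableSpace E] [OpensMeasurableSpace E] [NormedAddCommGroup F] (μ : Measure E)
    [IsFiniteMeasureOnCompacts μ] {R : ℝ} {f : E → F} (hf : Continuous f)
    (hsupp : tsupport f ⊆ ball 0 R) {w : ℝ → ℝ} (hw : ContinuousOn w (Ico 0 R)) :
    Integrable (fun x ↦ ‖f x‖ * w ‖x‖) μ := by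
  have hcompact : HasCompactSupport f := (isCompact_closedBall 0 R).of_isClosed_subset
    (isClosed_tsupport f) (hsupp.trans ball_subset_closedBall)
  have hnorm : tsupport (fun x ↦ ‖f x‖) ⊆ ball 0 R := by
    rwa [tsupport, ← Function.comp_def norm f, Function.support_comp_eq norm norm_eq_zero]
  have hw' : ContinuousOn (fun x : E ↦ w ‖x‖) (ball 0 R) :=
    hw.comp continuous_norm.continuousOn fun x hx ↦ ⟨norm_nonneg x, mem_ball_zero_iff.1 hx⟩
  exact ((hf.norm.continuousOn.mul hw').continuous_of_tsupport_subset isOpen_ball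
    (tsupport_mul_subset_left.trans hnorm)).integrable_of_hasCompactSupport hcompact.norm.mul_right

/-- `φ` is the profile of a calibrating radial field `φ(|x|) x/|x|` on the ball of radius `R` in
dimension `k + 1`, in the sense that its divergence `φ' + k φ / r` is at least `V`. It need not
vanish at the origin: the boundary term there has a favourable sign. -/
structure IsRadialFlux (k : ℕ) (R : ℝ) (φ V : ℝ → ℝ) : Prop where
  continuousOn_flux : ContinuousOn φ (Ico 0 R)
  continuousOn_potential : ContinuousOn V (Ico 0 R)
  flux_nonneg : ∀ r ∈ Ico 0 R, 0 ≤ φ r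
  exists_hasDerivAt : ∀ r ∈ Ioo 0 R, ∃ φ', HasDerivAt φ φ' r ∧ V r ≤ φ' + k * (φ r / r)

theorem IsRadialFlux.exists_hasDerivAt_pow_mul {k : ℕ} {R r : ℝ} {φ V : ℝ → ℝ}
    (hφ : IsRadialFlux k R φ V) (hr : r ∈ Ioo 0 R) :
    ∃ p', HasDerivAt (fun r ↦ r ^ k * φ r) p' r ∧ r ^ k * V r ≤ p' := by
  obtain ⟨φ', hφ', hV⟩ := hφ.exists_hasDerivAt r hr
  refine ⟨_, (hasDerivAt_pow_of_ne_zero k hr.1.ne').fun_mul hφ', ?_⟩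
  calc r ^ k * V r ≤ r ^ k * (φ' + k * (φ r / r)) :=
        mul_le_mul_of_nonneg_left hV (pow_nonneg hr.1.le k)
    _ = r ^ k * (k / r) * φ r + r ^ k * φ' := by ring

section Radial

variable {E F : Type*} [NormedAddCommGroup E] [NormedSpace ℝ E] [FiniteDimensional ℝ E]
  [NormedAddCommGroup F] [NormedSpace ℝ F] {u : E → F}
  {k : ℕ} {R : ℝ} {φ V : ℝ → ℝ}

theorem IsRadialFlux.setIntegral_ray_nonneg (hφ : IsRadialFlux k R φ V) (hR : 0 < R)
    (hu : ContDiff ℝ 1 u) (hsupp : tsupport u ⊆ ball 0 R) {ω : E} (hω : ‖ω‖ = 1) :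
    0 ≤ ∫ r in Ioi (0 : ℝ),
      r ^ k • (‖fderiv ℝ u (r • ω)‖ * φ ‖r • ω‖ - ‖u (r • ω)‖ * V ‖r • ω‖) := by
  have norm_ray {r : ℝ} (hr : 0 ≤ r) : ‖r • ω‖ = r := by
    rw [norm_smul, hω, Real.norm_of_nonneg hr, mul_one]
  obtain ⟨ρ, hρ, hsuppρ⟩ := exists_pos_lt_subset_ball hR (isClosed_tsupport u) hsupp
  have ray_notMem {r : ℝ} (hr : ρ ≤ r) : r • ω ∉ tsupport u := fun hmem ↦ by
    simpa [norm_ray (hρ.1.le.trans hr), hr.not_gt] using hsuppρ hmem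
  have hray {r : ℝ} : HasDerivAt (fun t : ℝ ↦ u (t • ω)) (fderiv ℝ u (r • ω) ω) r :=
    (hu.differentiable one_ne_zero _).hasFDerivAt.comp_hasDerivAt r
      (by simpa using (hasDerivAt_id r).smul_const ω)
  have hIcc : Icc 0 ρ ⊆ Ico 0 R := Icc_subset_Ico_right hρ.2
  have key : 0 ≤ ∫ r in (0 : ℝ)..ρ,
      (‖fderiv ℝ u (r • ω)‖ * (r ^ k * φ r) - ‖u (r • ω)‖ * (r ^ k * V r)) :=
    intervalIntegral_norm_mul_sub_nonneg hρ.1.le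
      (fun r _ ↦ hray.continuousAt.continuousWithinAt)
      ((hu.continuous_fderiv one_ne_zero).norm.comp (by fun_prop)).continuousOn
      ((continuousOn_pow k).mul (hφ.continuousOn_flux.mono hIcc))
      ((continuousOn_pow k).mul (hφ.continuousOn_potential.mono hIcc))
      (fun r _ ↦ ⟨_, hray, by simpa [hω] using (fderiv ℝ u (r • ω)).le_opNorm ω⟩)
      (fun r hr ↦ hφ.exists_hasDerivAt_pow_mul ⟨hr.1, hr.2.trans hρ.2⟩)
      (fun r hr ↦ mul_nonneg (pow_nonneg hr.1 k) (hφ.flux_nonneg r (hIcc hr)))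
      (image_eq_zero_of_notMem_tsupport (ray_notMem le_rfl))
  rw [intervalIntegral.integral_of_le hρ.1.le] at key
  refine key.trans_eq <| .trans (setIntegral_congr_fun measurableSet_Ioc fun r hr ↦ ?_) <|
    (setIntegral_eq_of_subset_of_forall_sdiff_eq_zero measurableSet_Ioi Ioc_subset_Ioi_self
      fun r hr ↦ ?_).symm
  · simp only [norm_ray hr.1.le, smul_eq_mul]
    ring
  · have hr := ray_notMem (not_le.1 fun h ↦ hr.2 ⟨hr.1, h⟩).le
    simp [image_eq_zero_of_notMem_tsupport hr,
      image_eq_zero_of_notMem_tsupport (mt (tsupport_fderiv_subset ℝ ·) hr)]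

variable [MeasurableSpace E] [BorelSpace E] (μ : Measure E) [μ.IsAddHaarMeasure]

theorem IsRadialFlux.setIntegral_norm_mul_le [Nontrivial E]
    (hφ : IsRadialFlux (finrank ℝ E - 1) R φ V) (hR : 0 < R)
    (hu : ContDiff ℝ 1 u) (hsupp : tsupport u ⊆ ball 0 R) :
    ∫ x in ball 0 R, ‖u x‖ * V ‖x‖ ∂μ ≤ ∫ x in ball 0 R, ‖fderiv ℝ u x‖ * φ ‖x‖ ∂μ := by
  have hsupp' := (tsupport_fderiv_subset ℝ (f := u)).trans hsupp
  have hV := integrable_norm_mul_comp_norm μ hu.continuous hsupp hφ.continuousOn_potential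
  have hφ' := integrable_norm_mul_comp_norm μ (hu.continuous_fderiv one_ne_zero) hsupp'
    hφ.continuousOn_flux
  rw [setIntegral_eq_integral_of_forall_compl_eq_zero fun x hx ↦ by
      simp [image_eq_zero_of_notMem_tsupport (mt (hsupp ·) hx)],
    setIntegral_eq_integral_of_forall_compl_eq_zero fun x hx ↦ by
      simp [image_eq_zero_of_notMem_tsupport (mt (hsupp' ·) hx)],
    ← sub_nonneg, ← integral_sub hφ' hV]
  refine (integral_nonneg fun ω ↦ ?_).trans_eq
    (integral_eq_integral_toSphere_integral_Ioi μ (hφ'.sub hV)).symm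
  exact hφ.setIntegral_ray_nonneg hR hu hsupp (mem_sphere_zero_iff_norm.1 ω.2)

end Radial

/-- The function `X` of the paper, on `(0, 1]`. -/
noncomputable def logWeight (t : ℝ) : ℝ := (1 - Real.log t)⁻¹

theorem logWeight_pos {t : ℝ} (ht : t ∈ Ioc 0 1) : 0 < logWeight t :=
  inv_pos.2 (by linarith [Real.log_nonpos ht.1.le ht.2])

theorem logWeight_le_one {t : ℝ} (ht : t ∈ Ioc 0 1) : logWeight t ≤ 1 :=
  inv_le_one_of_one_le₀ (by linarith [Real.log_nonpos ht.1.le ht.2])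

theorem hasDerivAt_logWeight {t : ℝ} (ht : t ≠ 0) (hlog : 1 - Real.log t ≠ 0) :
    HasDerivAt logWeight (logWeight t ^ 2 / t) t := by
  refine (((Real.hasDerivAt_log ht).const_sub 1).fun_inv hlog).congr_deriv ?_
  rw [logWeight]
  field_simp

theorem hasDerivAt_logWeight_rpow {t : ℝ} (ht : t ∈ Ioc 0 1) (γ : ℝ) :
    HasDerivAt (fun t ↦ logWeight t ^ (γ - 1)) ((γ - 1) * (logWeight t ^ γ / t)) t := by
  have hX := logWeight_pos ht
  have hlog : 1 - Real.log t ≠ 0 := (inv_pos.1 hX).ne'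
  refine ((hasDerivAt_logWeight ht.1.ne' hlog).rpow_const (.inl hX.ne')).congr_deriv ?_
  have hpow : logWeight t ^ γ = logWeight t ^ 2 * logWeight t ^ (γ - 1 - 1) := by
    rw [← Real.rpow_natCast, ← Real.rpow_add hX]
    congr 1
    push_cast
    ring
  rw [hpow]
  ring

theorem continuousOn_logWeight : ContinuousOn logWeight (Ioc 0 1) := fun _ ht ↦
  (hasDerivAt_logWeight ht.1.ne' (inv_pos.1 (logWeight_pos ht)).ne').continuousAt.continuousWithinAt

section HardyFlux

variable {R s γ r : ℝ} {m k : ℕ}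

/-- The profile `d ^ (1 - s) - R ^ (1 - s) X ^ (γ - 1) (d/R)` of the calibrating radial field, as a
function of the radius `r`, with `d = R - r`. -/
noncomputable def hardyFlux (R s γ r : ℝ) : ℝ :=
  (R - r) ^ (1 - s) - R ^ (1 - s) * logWeight ((R - r) / R) ^ (γ - 1)

/-- The derivative in `r` of `hardyFlux`, arranged as the leading and the logarithmic weights of the
Hardy inequality. -/
noncomputable def hardyFluxDeriv (R s γ r : ℝ) : ℝ :=
  (s - 1) * (1 / (R - r) ^ s) + (γ - 1) / R ^ (s - 1) * (1 / (R - r) * logWeight ((R - r) / R) ^ γ)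

/-- The weight of the series of intermediate Hardy terms, without the factor `n - 1`, as a function
of the radius `r`. -/
noncomputable def hardySeries (R s : ℝ) (m : ℕ) (r : ℝ) : ℝ :=
  ∑ j ∈ Finset.Icc 1 m, 1 / R ^ j * (1 / (R - r) ^ (s - j))

/-- The total weight multiplying `‖u‖` in the Hardy inequality in dimension `k + 1`, as a function
of the radius `r`. -/
noncomputable def hardyPotential (k m : ℕ) (R s γ r : ℝ) : ℝ :=
  hardyFluxDeriv R s γ r + k * hardySeries R s m r

theorem sub_div_mem_Ioc (hr : r ∈ Ico 0 R) : (R - r) / R ∈ Ioc 0 1 :=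
  have hR : 0 < R := hr.1.trans_lt hr.2
  ⟨div_pos (sub_pos.2 hr.2) hR, (div_le_one hR).2 (sub_le_self R hr.1)⟩

theorem rpow_one_sub_eq_one_div {d : ℝ} (hd : 0 ≤ d) (s : ℝ) : d ^ (1 - s) = 1 / d ^ (s - 1) := by
  rw [← neg_sub, Real.rpow_neg hd, one_div]

theorem hasDerivAt_hardyFlux (hr : r ∈ Ico 0 R) :
    HasDerivAt (hardyFlux R s γ) (hardyFluxDeriv R s γ r) r := by
  have hR : 0 < R := hr.1.trans_lt hr.2
  have hd : 0 < R - r := sub_pos.2 hr.2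
  have hdist : HasDerivAt (fun r ↦ R - r) (-1) r := (hasDerivAt_id r).const_sub R
  have hlog := (hasDerivAt_logWeight_rpow (sub_div_mem_Ioc hr) γ).comp r (hdist.div_const R)
  refine ((hdist.rpow_const (.inl hd.ne')).sub (hlog.const_mul (R ^ (1 - s)))).congr_deriv ?_
  rw [hardyFluxDeriv, rpow_one_sub_eq_one_div hR.le, sub_right_comm, sub_self, zero_sub,
    Real.rpow_neg hd.le]
  field_simp
  ring

theorem continuousOn_hardyFlux : ContinuousOn (hardyFlux R s γ) (Ico 0 R) := fun _ hr ↦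
  (hasDerivAt_hardyFlux hr).continuousAt.continuousWithinAt

theorem mul_hardySeries (hR : R ≠ 0) (hr : r < R) :
    r * hardySeries R s m r = (R - r) ^ (1 - s) * (1 - ((R - r) / R) ^ m) := by
  have hd : 0 < R - r := sub_pos.2 hr
  induction m with
  | zero => simp [hardySeries]
  | succ m ih =>
    have hpow : (R - r) ^ (s - (m + 1 : ℕ)) = (R - r) ^ (s - 1) / (R - r) ^ m := by
      rw [← Real.rpow_sub_natCast hd.ne']
      congr 1
      push_cast
      ring
    have hsucc : hardySeries R s (m + 1) r =
        hardySeries R s m r + 1 / R ^ (m + 1) * (1 / (R - r) ^ (s - (m + 1 : ℕ))) :=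
      Finset.sum_Icc_succ_top (by omega) _
    rw [hsucc, mul_add, ih, hpow, rpow_one_sub_eq_one_div hd.le, div_pow, div_pow]
    field_simp
    ring

theorem mul_hardySeries_le_hardyFlux (hγ : 1 ≤ γ) (hm : m + 1 ≤ s) (hr : r ∈ Ico 0 R) :
    r * hardySeries R s m r ≤ hardyFlux R s γ r := by
  have hR : 0 < R := hr.1.trans_lt hr.2
  have hd : 0 < R - r := sub_pos.2 hr.2
  have ht := sub_div_mem_Ioc hr
  have hlog : logWeight ((R - r) / R) ^ (γ - 1) ≤ 1 :=
    Real.rpow_le_one (logWeight_pos ht).le (logWeight_le_one ht) (by linarith)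
  have hpow : ((R - r) / R) ^ (s - 1) ≤ ((R - r) / R) ^ m := by
    rw [← Real.rpow_natCast]
    exact Real.rpow_le_rpow_of_exponent_ge ht.1 ht.2 (by linarith)
  have hremainder : R ^ (1 - s) * logWeight ((R - r) / R) ^ (γ - 1) ≤
      (R - r) ^ (1 - s) * ((R - r) / R) ^ m :=
    calc R ^ (1 - s) * logWeight ((R - r) / R) ^ (γ - 1) ≤ R ^ (1 - s) :=
          mul_le_of_le_one_right (by positivity) hlog
      _ = (R - r) ^ (1 - s) * ((R - r) / R) ^ (s - 1) := by
        rw [Real.div_rpow hd.le hR.le, rpow_one_sub_eq_one_div hd.le, rpow_one_sub_eq_one_div hR.le]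
        field_simp
      _ ≤ (R - r) ^ (1 - s) * ((R - r) / R) ^ m := by gcongr
  rw [mul_hardySeries hR.ne' hr.2, mul_sub, mul_one, hardyFlux]
  exact sub_le_sub_left hremainder _

theorem hardyFlux_nonneg (hs : 1 ≤ s) (hγ : 1 ≤ γ) (hr : r ∈ Ico 0 R) :
    0 ≤ hardyFlux R s γ r := by
  simpa [hardySeries] using mul_hardySeries_le_hardyFlux (m := 0) hγ (by simpa using hs) hr

theorem hardyFlux_le (hr : r ∈ Ico 0 R) : hardyFlux R s γ r ≤ 1 / (R - r) ^ (s - 1) := by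
  have hR : 0 < R := hr.1.trans_lt hr.2
  have hX := logWeight_pos (sub_div_mem_Ioc hr)
  rw [hardyFlux, rpow_one_sub_eq_one_div (sub_pos.2 hr.2).le]
  exact sub_le_self _ (by positivity)

theorem continuousOn_one_div_sub_rpow (R s : ℝ) :
    ContinuousOn (fun r : ℝ ↦ 1 / (R - r) ^ s) (Ico 0 R) :=
  continuousOn_const.div ((by fun_prop : ContinuousOn (fun r ↦ R - r) _).rpow_const
    fun r hr ↦ .inl (sub_pos.2 hr.2).ne') fun r hr ↦ (Real.rpow_pos_of_pos (sub_pos.2 hr.2) s).ne'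

theorem continuousOn_one_div_sub_mul_logWeight_rpow (R γ : ℝ) :
    ContinuousOn (fun r : ℝ ↦ 1 / (R - r) * logWeight ((R - r) / R) ^ γ) (Ico 0 R) := by
  have hlog : ContinuousOn (fun r : ℝ ↦ logWeight ((R - r) / R)) (Ico 0 R) :=
    continuousOn_logWeight.comp (by fun_prop) fun r ↦ sub_div_mem_Ioc
  exact (continuousOn_const.div (by fun_prop) fun r hr ↦ (sub_pos.2 hr.2).ne').mul
    (hlog.rpow_const fun r hr ↦ .inl (logWeight_pos (sub_div_mem_Ioc hr)).ne')

theorem continuousOn_hardyPotential : ContinuousOn (hardyPotential k m R s γ) (Ico 0 R) :=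
  ((continuousOn_const.mul (continuousOn_one_div_sub_rpow R s)).add
    (continuousOn_const.mul (continuousOn_one_div_sub_mul_logWeight_rpow R γ))).add <|
    continuousOn_const.mul <| continuousOn_finsetSum _ fun j _ ↦
      continuousOn_const.mul (continuousOn_one_div_sub_rpow R (s - j))

theorem isRadialFlux_hardyFlux (hγ : 1 ≤ γ) (hm : m + 1 ≤ s) :
    IsRadialFlux k R (hardyFlux R s γ) (hardyPotential k m R s γ) where
  continuousOn_flux := continuousOn_hardyFlux
  continuousOn_potential := continuousOn_hardyPotential
  flux_nonneg _ := hardyFlux_nonneg (by linarith [m.cast_nonneg (α := ℝ)]) hγ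
  exists_hasDerivAt r hr := by
    have hr' := Ioo_subset_Ico_self hr
    have hseries : hardySeries R s m r ≤ hardyFlux R s γ r / r :=
      (le_div_iff₀' hr.1).2 (mul_hardySeries_le_hardyFlux hγ hm hr')
    exact ⟨_, hasDerivAt_hardyFlux hr', by rw [hardyPotential]; gcongr⟩

end HardyFlux

section Hardy

variable {E F : Type*} [NormedAddCommGroup E] [ProperSpace E] [MeasurableSpace E]
  [OpensMeasurableSpace E] [NormedAddCommGroup F] (μ : Measure E) [IsFiniteMeasureOnCompacts μ]
  {R s γ : ℝ} {m k : ℕ} {u : E → F}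

theorem setIntegral_norm_mul_hardyPotential (hu : Continuous u) (hsupp : tsupport u ⊆ ball 0 R) :
    ∫ x in ball 0 R, ‖u x‖ * hardyPotential k m R s γ ‖x‖ ∂μ =
      (s - 1) * (∫ x in ball 0 R, ‖u x‖ / (R - ‖x‖) ^ s ∂μ)
      + (∑ j ∈ Finset.Icc 1 m,
          k / R ^ j * ∫ x in ball 0 R, ‖u x‖ / (R - ‖x‖) ^ (s - j) ∂μ)
      + (γ - 1) / R ^ (s - 1) *
          ∫ x in ball 0 R, ‖u x‖ / (R - ‖x‖) * logWeight ((R - ‖x‖) / R) ^ γ ∂μ := by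
  have hpow (p : ℝ) : IntegrableOn (fun x ↦ ‖u x‖ / (R - ‖x‖) ^ p) (ball 0 R) μ := by
    simpa only [mul_one_div] using
      (integrable_norm_mul_comp_norm μ hu hsupp (continuousOn_one_div_sub_rpow R p)).integrableOn
  have hlog : IntegrableOn (fun x ↦ ‖u x‖ / (R - ‖x‖) * logWeight ((R - ‖x‖) / R) ^ γ)
      (ball 0 R) μ := by
    simpa only [← mul_assoc, mul_one_div] using (integrable_norm_mul_comp_norm μ hu hsupp
      (continuousOn_one_div_sub_mul_logWeight_rpow R γ)).integrableOn
  have hsum := integrable_finsetSum (Finset.Icc 1 m) fun (j : ℕ) _ ↦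
    (hpow (s - j)).const_mul (k / R ^ j)
  simp only [← integral_const_mul]
  rw [← integral_finsetSum _ fun (j : ℕ) _ ↦ (hpow (s - j)).const_mul (k / R ^ j),
    ← integral_add ((hpow s).const_mul _) hsum,
    ← integral_add (((hpow s).const_mul _).fun_add hsum) (hlog.const_mul _)]
  congr 1 with x
  have hseries : ‖u x‖ * (k * hardySeries R s m ‖x‖) =
      ∑ j ∈ Finset.Icc 1 m, k / R ^ j * (‖u x‖ / (R - ‖x‖) ^ (s - j)) := by
    simp only [hardySeries, Finset.mul_sum]
    exact Finset.sum_congr rfl fun j _ ↦ by ring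
  rw [hardyPotential, mul_add, hseries, hardyFluxDeriv]
  ring

theorem setIntegral_norm_mul_hardyFlux_le (hu : Continuous u) (hsupp : tsupport u ⊆ ball 0 R) :
    ∫ x in ball 0 R, ‖u x‖ * hardyFlux R s γ ‖x‖ ∂μ ≤
      ∫ x in ball 0 R, ‖u x‖ / (R - ‖x‖) ^ (s - 1) ∂μ := by
  simp only [← mul_one_div ‖u _‖]
  exact setIntegral_mono_on
    (integrable_norm_mul_comp_norm μ hu hsupp continuousOn_hardyFlux).integrableOn
    (integrable_norm_mul_comp_norm μ hu hsupp (continuousOn_one_div_sub_rpow R _)).integrableOn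
    measurableSet_ball fun x hx ↦ mul_le_mul_of_nonneg_left
      (hardyFlux_le ⟨norm_nonneg x, mem_ball_zero_iff.1 hx⟩) (norm_nonneg _)

end Hardy

theorem natFloor_sub_one_add_one_le {s : ℝ} (hs : 1 ≤ s) : ((⌊s⌋₊ - 1 : ℕ) : ℝ) + 1 ≤ s := by
  rw [← Nat.cast_add_one, Nat.sub_add_cancel (Nat.floor_pos.2 hs)]
  exact Nat.floor_le (by linarith)

theorem l1_weighted_hardy_ball_series_general {E F : Type*} [NormedAddCommGroup E]
    [NormedSpace ℝ E] [FiniteDimensional ℝ E] [Nontrivial E] [MeasurableSpace E] [BorelSpace E]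
    [NormedAddCommGroup F] [NormedSpace ℝ F] (μ : Measure E) [μ.IsAddHaarMeasure] {R s γ : ℝ}
    {m : ℕ} {u : E → F} (hR : 0 < R) (hγ : 1 ≤ γ)
    (hm : m + 1 ≤ s) (hu : ContDiff ℝ 1 u) (hsupp : tsupport u ⊆ ball 0 R) :
    (s - 1) * (∫ x in ball 0 R, ‖u x‖ / (R - ‖x‖) ^ s ∂μ)
      + (∑ j ∈ Finset.Icc 1 m, ((finrank ℝ E : ℝ) - 1) / R ^ j *
          ∫ x in ball 0 R, ‖u x‖ / (R - ‖x‖) ^ (s - j) ∂μ)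
      + (γ - 1) / R ^ (s - 1) *
          ∫ x in ball 0 R, ‖u x‖ / (R - ‖x‖) * logWeight ((R - ‖x‖) / R) ^ γ ∂μ ≤
    ∫ x in ball 0 R, ‖fderiv ℝ u x‖ / (R - ‖x‖) ^ (s - 1) ∂μ := by
  rw [← Nat.cast_pred finrank_pos, ← setIntegral_norm_mul_hardyPotential μ hu.continuous hsupp]
  exact ((isRadialFlux_hardyFlux hγ hm).setIntegral_norm_mul_le μ hR hu hsupp).trans
    (setIntegral_norm_mul_hardyFlux_le μ (hu.continuous_fderiv one_ne_zero)
      ((tsupport_fderiv_subset ℝ).trans hsupp))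

/-- `L^1` weighted Hardy inequality on a ball with a finite series of
optimal remainder terms and a final logarithmic remainder. -/
theorem l1_weighted_hardy_ball_series (n : ℕ) (hn : 1 ≤ n) (R : ℝ) (hR : 0 < R)
    (s γ : ℝ) (hs : 2 ≤ s) (hγ : 1 < γ) :
    ∀ u : EuclideanSpace ℝ (Fin n) → ℝ, ContDiff ℝ (⊤ : ℕ∞) u → HasCompactSupport u →
      tsupport u ⊆ Metric.ball (0 : EuclideanSpace ℝ (Fin n)) R →
      (∫ x in Metric.ball (0 : EuclideanSpace ℝ (Fin n)) R,
          ‖fderiv ℝ u x‖ / (R - ‖x‖) ^ (s - 1)) ≥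
        (s - 1) * (∫ x in Metric.ball (0 : EuclideanSpace ℝ (Fin n)) R,
            |u x| / (R - ‖x‖) ^ s)
        + (∑ k ∈ Finset.Icc 1 (⌊s⌋₊ - 1),
            ((n : ℝ) - 1) / R ^ k *
              ∫ x in Metric.ball (0 : EuclideanSpace ℝ (Fin n)) R,
                |u x| / (R - ‖x‖) ^ (s - (k : ℝ)))
        + ((γ - 1) / R ^ (s - 1)) *
            ∫ x in Metric.ball (0 : EuclideanSpace ℝ (Fin n)) R,
              (|u x| / (R - ‖x‖)) * ((1 - Real.log ((R - ‖x‖) / R))⁻¹) ^ γ := by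
  have : NeZero n := ⟨by omega⟩
  intro u hu _ hsupp
  simpa only [finrank_euclideanSpace_fin, logWeight, Real.norm_eq_abs] using
    l1_weighted_hardy_ball_series_general volume hR hγ.le
      (natFloor_sub_one_add_one_le (by linarith)) (hu.of_le (by simp)) hsupp
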